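/- arXiv:1712.10178 — 2 statements merged into one kernel-verified Lean document; each statement's English description precedes it below -/
import Mathlib

section
/- Let F be a field of characteristic 2 with [F : F²] = 2ⁿ for some n ≥ 2, and let m ∈ {1,…,n−1}. Then any collection of 2^{n−m+1} − 1 anisotropic bilinear n-fold Pfister forms over F has a common bilinear m-fold Pfister factor; that is, there is a bilinear m-fold Pfister form ρ and bilinear (n−m)-fold Pfister forms π₁,…,π_N with Bₗ ≅ ρ ⊗ πₗ for all ℓ. -/
/-- The subfield of squares `F²` of a field of characteristic 2. -/
def sqSubfield (F : Type*) [Field F] [CharP F 2] : Subfield F where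
  carrier := {x | ∃ y : F, y ^ 2 = x}
  mul_mem' := by rintro a b ⟨y, rfl⟩ ⟨z, rfl⟩; exact ⟨y * z, by ring⟩
  one_mem' := ⟨1, one_pow 2⟩
  add_mem' := by
    rintro a b ⟨y, rfl⟩ ⟨z, rfl⟩
    exact ⟨y + z, by rw [add_sq]; linear_combination (y*z) * (CharP.cast_eq_zero F 2)⟩
  zero_mem' := ⟨0, by ring⟩
  neg_mem' := by rintro a ⟨y, rfl⟩; exact ⟨y, (CharTwo.neg_eq _).symm⟩
  inv_mem' := by rintro a ⟨y, rfl⟩; exact ⟨y⁻¹, by rw [inv_pow]⟩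

/-- The monomial `β₁^{d₁} ⋯ βₙ^{dₙ}`. -/
def mono {R : Type*} [CommRing R] {n : ℕ} (β : Fin n → R) (d : Fin n → Bool) : R :=
  ∏ i, if d i then β i else 1

/-- The diagonal bilinear `n`-fold Pfister form `⟨⟨β₁,…,βₙ⟩⟩_b`. -/
def bPf (F : Type*) [Field F] {n : ℕ} (β : Fin n → F) (v w : (Fin n → Bool) → F) : F :=
  ∑ d, mono β d * v d * w d

/-- Pure part of the bilinear Pfister form. -/
def bPfPure (F : Type*) [Field F] {n : ℕ} (β : Fin n → F)
    (v w : {d : Fin n → Bool // d ≠ fun _ => false} → F) : F :=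
  ∑ d, mono β d.1 * v d * w d

/-- Anisotropy of a bilinear form. -/
def BAniso (F : Type*) [Field F] {V : Type*} [AddCommGroup V] [Module F V]
    (B : V → V → F) : Prop :=
  ∀ v : V, v ≠ 0 → B v v ≠ 0

/-- Isometry of bilinear forms. -/
def BilinIsom (F : Type*) [Field F] {V W : Type*} [AddCommGroup V] [Module F V]
    [AddCommGroup W] [Module F W] (B₁ : V → V → F) (B₂ : W → W → F) : Prop :=
  ∃ e : V ≃ₗ[F] W, ∀ v w, B₂ (e v) (e w) = B₁ v w

/-- Isometry of quadratic forms (given as value functions). -/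
def QuadIsom (F : Type*) [Field F] {V W : Type*} [AddCommGroup V] [Module F V]
    [AddCommGroup W] [Module F W] (q₁ : V → F) (q₂ : W → F) : Prop :=
  ∃ e : V ≃ₗ[F] W, ∀ v, q₂ (e v) = q₁ v

/-- The quadratic Pfister form `⟨⟨β₁,…,β_m, a]]` as a value function. -/
def qPf (R : Type*) [CommRing R] {m : ℕ} (β : Fin m → R) (a : R)
    (x : (Fin m → Bool) → R × R) : R :=
  ∑ e, mono β e * ((x e).1 ^ 2 + (x e).1 * (x e).2 + a * (x e).2 ^ 2)

/-- Minimal index where `d` is `true`. -/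
noncomputable def minIdx {n : ℕ} (d : Fin n → Bool) (hd : d ≠ fun _ => false) : Fin n :=
  (Finset.univ.filter fun i => d i = true).min' (by
    obtain ⟨i, hi⟩ := Function.ne_iff.mp hd
    exact ⟨i, Finset.mem_filter.mpr ⟨Finset.mem_univ i, by simpa using hi⟩⟩)

/-- Remove the `ℓ`-th entry from a tuple. -/
def removeIdx {R : Type*} {n : ℕ} (α : Fin n → R) (ℓ : Fin n) (i : Fin (n - 1)) : R :=
  if h : (i : ℕ) < (ℓ : ℕ) then α ⟨i, by omega⟩ else α ⟨(i : ℕ) + 1, by omega⟩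

/-- First `n-1` entries of a tuple. -/
def front {R : Type*} {n : ℕ} (α : Fin n → R) (i : Fin (n - 1)) : R :=
  α ⟨i, by omega⟩

/-- Last entry of a tuple (junk value `0` if the tuple is empty). -/
def qlast {R : Type*} [CommRing R] {n : ℕ} (α : Fin n → R) : R :=
  if h : n = 0 then 0 else α ⟨n - 1, by omega⟩

section helpers
variable {F : Type*} [Field F] [CharP F 2]

/-- A square as an element of the subfield of squares. -/
def sqEl (a : F) : sqSubfield F := ⟨a ^ 2, a, rfl⟩

lemma sqEl_smul (a x : F) : sqEl a • x = a ^ 2 * x := rfl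

/-- All nontrivial monomials of `γ` are killed by `s`. -/
def GoodT (s : F →ₗ[sqSubfield F] sqSubfield F) {k : ℕ} (γ : Fin k → F) : Prop :=
  (∀ i, γ i ≠ 0) ∧ ∀ d : Fin k → Bool, d ≠ (fun _ => false) → s (mono γ d) = 0

lemma mono_zero {k : ℕ} (γ : Fin k → F) : mono γ (fun _ => false) = 1 := by
  simp [mono]

lemma mono_ne {k : ℕ} (γ : Fin k → F) (h : ∀ i, γ i ≠ 0) (d : Fin k → Bool) :
    mono γ d ≠ 0 := by
  unfold mono
  refine Finset.prod_ne_zero_iff.mpr fun i _ => ?_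
  split_ifs
  · exact h i
  · exact one_ne_zero

lemma mono_mul {k : ℕ} (γ : Fin k → F) (d e : Fin k → Bool) :
    mono γ d * mono γ e =
      (mono γ (fun i => d i && e i)) ^ 2 * mono γ (fun i => xor (d i) (e i)) := by
  unfold mono
  rw [← Finset.prod_mul_distrib, ← Finset.prod_pow, ← Finset.prod_mul_distrib]
  refine Finset.prod_congr rfl fun i _ => ?_
  cases hd : d i <;> cases he : e i <;> simp [sq, hd, he]

lemma mono_snoc {k : ℕ} (γ : Fin k → F) (y : F) (d : Fin (k + 1) → Bool) :
    mono (Fin.snoc γ y : Fin (k + 1) → F) d =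
      mono γ (fun i => d i.castSucc) * (if d (Fin.last k) then y else 1) := by
  unfold mono
  rw [Fin.prod_univ_castSucc]
  simp

lemma s_mono_mul (s : F →ₗ[sqSubfield F] sqSubfield F) (h1 : s 1 = 1) {k : ℕ} (γ : Fin k → F)
    (h : GoodT s γ) (d e : Fin k → Bool) :
    s (mono γ d * mono γ e) = if d = e then sqEl (mono γ d) else 0 := by
  rw [mono_mul, ← sqEl_smul, map_smul]
  split_ifs with hde
  · subst hde
    simp [mono_zero, h1]
  · rw [h.2 _ ?_, smul_zero]
    intro h0
    apply hde
    funext i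
    have := congrFun h0 i
    revert this
    cases d i <;> cases e i <;> simp

/-- The diagonal of the form. -/
def qd {k : ℕ} (γ : Fin k → F) (v : (Fin k → Bool) → F) : F := ∑ d, v d ^ 2 * mono γ d

lemma bPf_self {k : ℕ} (γ : Fin k → F) (v : (Fin k → Bool) → F) :
    bPf F γ v v = qd γ v := by
  unfold bPf qd
  exact Finset.sum_congr rfl fun d _ => by ring

lemma s_q (s : F →ₗ[sqSubfield F] sqSubfield F) (h1 : s 1 = 1) {k : ℕ} (γ : Fin k → F)
    (h : GoodT s γ) (v w : (Fin k → Bool) → F) :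
    (s (qd γ v * qd γ w) : F) = (bPf F γ v w) ^ 2 := by
  have key : s (qd γ v * qd γ w) = ∑ d, sqEl (mono γ d * v d * w d) := by
    unfold qd
    rw [Finset.sum_mul_sum, map_sum]
    refine Finset.sum_congr rfl fun d _ => ?_
    rw [map_sum, Finset.sum_eq_single d]
    · have : v d ^ 2 * mono γ d * (w d ^ 2 * mono γ d)
        = sqEl (v d * w d) • (mono γ d * mono γ d) := by rw [sqEl_smul]; ring
      rw [this, map_smul, s_mono_mul s h1 γ h, if_pos rfl]
      apply Subtype.ext
      simp only [sqEl, smul_eq_mul]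
      change (v d * w d) ^ 2 * (mono γ d) ^ 2 = _
      ring
    · intro e _ hne
      have : v d ^ 2 * mono γ d * (w e ^ 2 * mono γ e)
        = sqEl (v d * w e) • (mono γ d * mono γ e) := by rw [sqEl_smul]; ring
      rw [this, map_smul, s_mono_mul s h1 γ h, if_neg (Ne.symm hne), smul_zero]
    · simp
  rw [key]
  unfold bPf
  have : Fact (Nat.Prime 2) := ⟨Nat.prime_two⟩
  rw [sum_pow_char 2]
  simp [sqEl]

lemma sq_inj {a b : F} (h : a ^ 2 = b ^ 2) : a = b := by
  have : Fact (Nat.Prime 2) := ⟨Nat.prime_two⟩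
  exact frobenius_inj F 2 (by simpa [frobenius_def] using h)

lemma qd_inj_good (s : F →ₗ[sqSubfield F] sqSubfield F) (h1 : s 1 = 1) {k : ℕ} (γ : Fin k → F)
    (h : GoodT s γ) (v : (Fin k → Bool) → F) (hv : qd γ v = 0) : v = 0 := by
  funext d
  have h2 := s_q s h1 γ h v (Pi.single d 1)
  rw [hv, zero_mul, map_zero] at h2
  have h3 : bPf F γ v (Pi.single d 1) = 0 := by
    apply sq_inj
    rw [← h2]; simp
  unfold bPf at h3
  rw [Finset.sum_eq_single d] at h3
  · simpa [mono_ne γ h.1 d] using h3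
  · intro e _ he
    simp [he]
  · simp

lemma li_of_qd {k : ℕ} (γ : Fin k → F) (h : ∀ v, qd γ v = 0 → v = 0) :
    LinearIndependent (sqSubfield F) (fun d : Fin k → Bool => mono γ d) := by
  rw [Fintype.linearIndependent_iff]
  intro g hg d
  choose r hr using fun d => (g d).2
  have : qd γ r = 0 := by
    rw [← hg]
    unfold qd
    exact Finset.sum_congr rfl fun d _ => by rw [hr]; rfl
  have h0 := congrFun (h r this) d
  apply Subtype.ext
  rw [← hr, h0]; simp

lemma exists_s {n : ℕ} (hrk : Module.finrank (sqSubfield F) F = 2 ^ n) (β : Fin n → F)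
    (h0 : ∀ i, β i ≠ 0) (ha : BAniso F (bPf F β)) :
    ∃ s : F →ₗ[sqSubfield F] sqSubfield F, s 1 = 1 ∧ GoodT s β := by
  have li := li_of_qd β (fun v hv => by
    by_contra hne
    exact ha v hne (by rw [bPf_self, hv]))
  let b := basisOfLinearIndependentOfCardEqFinrank li (by rw [hrk]; simp)
  have hb : ∀ d, b d = mono β d := fun d => by simp [b]
  refine ⟨b.coord (fun _ => false), ?_, h0, fun d hd => ?_⟩
  · rw [← mono_zero β, ← hb]; simp
  · rw [← hb]; simp [hd]

lemma isom_of_good {n k : ℕ} (hk : k = n) (hrk : Module.finrank (sqSubfield F) F = 2 ^ n)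
    (s : F →ₗ[sqSubfield F] sqSubfield F) (h1 : s 1 = 1) (β : Fin n → F) (γ : Fin k → F)
    (hβ : GoodT s β) (hγ : GoodT s γ) : BilinIsom F (bPf F β) (bPf F γ) := by
  have li := li_of_qd γ (qd_inj_good s h1 γ hγ)
  let b := basisOfLinearIndependentOfCardEqFinrank li (by rw [hrk, hk]; simp)
  have hb : ∀ d, b d = mono γ d := fun d => by simp [b]
  have hP : ∀ d : Fin n → Bool, ∃ p : (Fin k → Bool) → F, qd γ p = mono β d := by
    intro d
    choose r hr using fun e => (b.repr (mono β d) e).2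
    refine ⟨r, ?_⟩
    conv_rhs => rw [← b.sum_repr (mono β d)]
    unfold qd
    exact Finset.sum_congr rfl fun e _ => by rw [hr, hb]; rfl
  choose P hP using hP
  let e : ((Fin n → Bool) → F) →ₗ[F] ((Fin k → Bool) → F) := Fintype.linearCombination F P
  have he : ∀ v, qd γ (e v) = qd β v := by
    intro v
    have : Fact (Nat.Prime 2) := ⟨Nat.prime_two⟩
    have : ∀ j, (e v j) ^ 2 = ∑ d, v d ^ 2 * P d j ^ 2 := by
      intro j
      simp only [e, Fintype.linearCombination_apply, Finset.sum_apply, Pi.smul_apply, smul_eq_mul]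
      rw [sum_pow_char 2]
      exact Finset.sum_congr rfl fun d _ => by ring
    unfold qd
    simp_rw [this, Finset.sum_mul]
    rw [Finset.sum_comm]
    refine Finset.sum_congr rfl fun d _ => ?_
    rw [← hP d]
    unfold qd
    rw [Finset.mul_sum]
    exact Finset.sum_congr rfl fun j _ => by ring
  have hinj : Function.Injective e := by
    rw [injective_iff_map_eq_zero]
    intro v hv
    apply qd_inj_good s h1 β hβ
    rw [← he, hv]; simp [qd]
  refine ⟨LinearEquiv.ofInjectiveOfFinrankEq e hinj (by simp [hk]), fun v w => ?_⟩
  apply sq_inj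
  rw [← s_q s h1 β hβ, ← s_q s h1 γ hγ, ← he, ← he]
  rfl

lemma extend {n k : ℕ} {ι : Type} [Fintype ι] (hrk : Module.finrank (sqSubfield F) F = 2 ^ n)
    (s : ι → F →ₗ[sqSubfield F] sqSubfield F) (γ : Fin k → F)
    (hγ : ∀ l, GoodT (s l) γ) (hlt : Fintype.card ι * 2 ^ k < 2 ^ n) :
    ∃ y : F, ∀ l, GoodT (s l) (Fin.snoc γ y : Fin (k + 1) → F) := by
  have : Module.Finite (sqSubfield F) F :=
    Module.finite_of_finrank_pos (by rw [hrk]; positivity)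
  let f : F →ₗ[sqSubfield F] (ι × (Fin k → Bool) → sqSubfield F) :=
    LinearMap.pi fun p => (s p.1).comp (LinearMap.mulLeft (sqSubfield F) (mono γ p.2))
  have hk := LinearMap.ker_ne_bot_of_finrank_lt (f := f) (by
    rw [hrk]; simpa using hlt)
  obtain ⟨y, hy, hy0⟩ := Submodule.exists_mem_ne_zero_of_ne_bot hk
  refine ⟨y, fun l => ⟨fun i => ?_, fun d hd => ?_⟩⟩
  · refine Fin.lastCases ?_ (fun i => ?_) i
    · simpa using hy0
    · simpa using (hγ l).1 i
  · rw [mono_snoc]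
    cases hl : d (Fin.last k)
    · simp only [Bool.false_eq_true, if_false, mul_one]
      apply (hγ l).2
      intro h0
      apply hd
      funext i
      refine Fin.lastCases hl (fun i => ?_) i
      exact congrFun h0 i
    · simpa [f] using congrFun (LinearMap.mem_ker.mp hy) (l, fun i => d i.castSucc)

end helpers

/-- over a field of characteristic 2 with `[F:F²] = 2ⁿ`, any
`2^(n-m+1) - 1` anisotropic bilinear `n`-fold Pfister forms have a common
bilinear `m`-fold Pfister factor. -/
theorem stmt_4 (F : Type*) [Field F] [CharP F 2] (n m : ℕ)
    (hn : 2 ≤ n) (hm1 : 1 ≤ m) (hm2 : m ≤ n - 1)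
    (hrk : Module.finrank (sqSubfield F) F = 2 ^ n)
    (B : Fin (2 ^ (n - m + 1) - 1) → Fin n → F)
    (hB0 : ∀ ℓ i, B ℓ i ≠ 0)
    (hBa : ∀ ℓ, BAniso F (bPf F (B ℓ))) :
    ∃ ρ : Fin m → F, (∀ i, ρ i ≠ 0) ∧
      ∀ ℓ, ∃ π : Fin (n - m) → F, (∀ i, π i ≠ 0) ∧
        BilinIsom F (bPf F (B ℓ)) (bPf F (Fin.append ρ π)) := by
  choose s h1 hs using fun ℓ => exists_s hrk (B ℓ) (hB0 ℓ) (hBa ℓ)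
  have hρ : ∀ k, k ≤ m → ∃ ρ : Fin k → F, ∀ ℓ, GoodT (s ℓ) ρ := by
    intro k
    induction k with
    | zero =>
      intro _
      refine ⟨Fin.elim0, fun ℓ => ⟨fun i => i.elim0, fun d hd => ?_⟩⟩
      exact absurd (funext fun i => i.elim0) hd
    | succ k ih =>
      intro hk
      obtain ⟨ρ, hρ⟩ := ih (by omega)
      obtain ⟨y, hy⟩ := extend hrk s ρ hρ (by
        rw [Fintype.card_fin]
        have hle : 2 ^ k ≤ 2 ^ (m - 1) := Nat.pow_le_pow_right (by norm_num) (by omega)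
        have hp : 0 < 2 ^ (m - 1) := by positivity
        have hN : 0 < 2 ^ (n - m + 1) := by positivity
        calc (2 ^ (n - m + 1) - 1) * 2 ^ k ≤ (2 ^ (n - m + 1) - 1) * 2 ^ (m - 1) :=
              Nat.mul_le_mul_left _ hle
          _ < 2 ^ (n - m + 1) * 2 ^ (m - 1) := Nat.mul_lt_mul_of_pos_right (by omega) hp
          _ = 2 ^ n := by rw [← pow_add]; congr 1; omega)
      exact ⟨_, hy⟩
  obtain ⟨ρ, hρ⟩ := hρ m le_rfl
  have hN : 0 < 2 ^ (n - m + 1) - 1 := by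
    have : 1 < 2 ^ (n - m + 1) := Nat.one_lt_two_pow (by omega)
    omega
  refine ⟨ρ, (hρ ⟨0, hN⟩).1, fun ℓ => ?_⟩
  have hπ : ∀ j, j ≤ n - m → ∃ π : Fin j → F, GoodT (s ℓ) (Fin.append ρ π) := by
    intro j
    induction j with
    | zero =>
      intro _
      refine ⟨Fin.elim0, ?_⟩
      have : Fin.append ρ (Fin.elim0 : Fin 0 → F) = ρ := by
        simp [Fin.append_right_nil]
      rw [this]
      exact hρ ℓ
    | succ j ih =>
      intro hj
      obtain ⟨π, hπ⟩ := ih (by omega)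
      obtain ⟨y, hy⟩ := extend (ι := Unit) hrk (fun _ => s ℓ) (Fin.append ρ π) (fun _ => hπ) (by
        rw [Fintype.card_unit, one_mul]
        exact Nat.pow_lt_pow_right (by norm_num) (by omega))
      refine ⟨Fin.snoc π y, ?_⟩
      rw [Fin.append_snoc]
      exact hy ()
  obtain ⟨π, hπ⟩ := hπ (n - m) le_rfl
  refine ⟨π, fun i => ?_, isom_of_good (by omega) hrk (s ℓ) (h1 ℓ) _ _ (hs ℓ) hπ⟩
  simpa using hπ.1 (Fin.natAdd m i)
end

section
/- Let F be a field of characteristic 2 and let B₁, B₂ be anisotropic bilinear n-fold Pfister forms over F such that for every γ ∈ F×, ⟨⟨γ⟩⟩_b is a factor of B₁ if and only if it is a factor of B₂. Then B₁ ≅ B₂. -/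
open Finset in
theorem aux_mono_mul {R : Type*} [CommRing R] {n : ℕ} (β : Fin n → R) (d e : Fin n → Bool) :
    mono β d * mono β e
      = mono β (fun i => xor (d i) (e i)) * mono β (fun i => d i && e i) ^ 2 := by
  unfold mono
  rw [← prod_pow, ← prod_mul_distrib, ← prod_mul_distrib]
  refine prod_congr rfl fun i _ => ?_
  cases hd : d i <;> cases he : e i <;> simp [hd, he, pow_two]

theorem aux_mono_ne {F : Type*} [Field F] {n : ℕ} (β : Fin n → F) (h : ∀ i, β i ≠ 0)
    (d : Fin n → Bool) : mono β d ≠ 0 := by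
  unfold mono
  refine Finset.prod_ne_zero_iff.mpr fun i _ => ?_
  split_ifs
  · exact h i
  · exact one_ne_zero

theorem aux_mono_false {R : Type*} [CommRing R] {n : ℕ} (β : Fin n → R) :
    mono β (fun _ => false) = 1 := by simp [mono]

/-- translation by `a` in the group of exponents -/
def auxShift {n : ℕ} (a : Fin n → Bool) : Equiv.Perm (Fin n → Bool) where
  toFun t := fun i => xor (a i) (t i)
  invFun t := fun i => xor (a i) (t i)
  left_inv t := by funext i; simp
  right_inv t := by funext i; simp

section
variable {F : Type*} [Field F]

theorem aux_add_left {n : ℕ} (β : Fin n → F) (u v w : (Fin n → Bool) → F) :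
    bPf F β (u + v) w = bPf F β u w + bPf F β v w := by
  simp only [bPf, ← Finset.sum_add_distrib, Pi.add_apply]
  exact Finset.sum_congr rfl fun _ _ => by ring

theorem aux_comm {n : ℕ} (β : Fin n → F) (u v : (Fin n → Bool) → F) :
    bPf F β u v = bPf F β v u := by
  simp only [bPf]
  exact Finset.sum_congr rfl fun _ _ => by ring

theorem aux_smul_left {n : ℕ} (β : Fin n → F) (c : F) (u w : (Fin n → Bool) → F) :
    bPf F β (c • u) w = c * bPf F β u w := by
  simp only [bPf, Finset.mul_sum, Pi.smul_apply, smul_eq_mul]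
  exact Finset.sum_congr rfl fun _ _ => by ring

theorem aux_smul_right {n : ℕ} (β : Fin n → F) (c : F) (u w : (Fin n → Bool) → F) :
    bPf F β u (c • w) = c * bPf F β u w := by
  rw [aux_comm, aux_smul_left, aux_comm]

theorem aux_sum_left {n : ℕ} (β : Fin n → F) {ι : Type*} (s : Finset ι)
    (f : ι → (Fin n → Bool) → F) (w : (Fin n → Bool) → F) :
    bPf F β (∑ i ∈ s, f i) w = ∑ i ∈ s, bPf F β (f i) w := by
  classical
  induction s using Finset.induction_on with
  | empty => simp [bPf]
  | insert a s ha ih => rw [Finset.sum_insert ha, Finset.sum_insert ha, aux_add_left, ih]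

theorem aux_sum_right {n : ℕ} (β : Fin n → F) {ι : Type*} (s : Finset ι)
    (f : ι → (Fin n → Bool) → F) (w : (Fin n → Bool) → F) :
    bPf F β w (∑ i ∈ s, f i) = ∑ i ∈ s, bPf F β w (f i) := by
  rw [aux_comm, aux_sum_left]
  exact Finset.sum_congr rfl fun _ _ => aux_comm _ _ _

theorem aux_single {n : ℕ} (β : Fin n → F) (u : (Fin n → Bool) → F) (d : Fin n → Bool) :
    bPf F β u (Pi.single d 1) = mono β d * u d := by
  unfold bPf
  rw [Finset.sum_eq_single d]
  · simp
  · intro b _ hb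
    simp [Pi.single_eq_of_ne hb]
  · simp

theorem aux_inj [CharP F 2] {n : ℕ} (β : Fin n → F) (h : BAniso F (bPf F β))
    (u v : (Fin n → Bool) → F) (huv : bPf F β u u = bPf F β v v) : u = v := by
  by_contra hne
  have h1 : u + v ≠ 0 := by
    intro h0
    apply hne
    funext d
    have := congrFun h0 d
    simp only [Pi.add_apply, Pi.zero_apply] at this
    exact CharTwo.add_eq_zero.mp this
  apply h _ h1
  rw [aux_add_left, aux_comm β u, aux_comm β v (u + v), aux_add_left, aux_add_left,
    aux_comm β v u, huv]
  linear_combination (bPf F β v v + bPf F β u v) * (CharP.cast_eq_zero F 2)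

/-- Multiplicativity: if `Q(u) Q(w) = Q(z)` then `B(u,w)` is the constant coefficient of `z`. -/
theorem aux_key [CharP F 2] {n : ℕ} (β : Fin n → F) (h : BAniso F (bPf F β))
    (u w z : (Fin n → Bool) → F)
    (huv : bPf F β u u * bPf F β w w = bPf F β z z) : bPf F β u w = z (fun _ => false) := by
  let p : (Fin n → Bool) → F := fun t =>
    ∑ a, u a * w (auxShift a t) * mono β (fun i => a i && auxShift a t i)
  have hp : bPf F β p p = bPf F β u u * bPf F β w w := by
    have e1 : bPf F β p p = ∑ t, ∑ a, mono β t *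
        (u a * w (auxShift a t) * mono β (fun i => a i && auxShift a t i)) ^ 2 := by
      unfold bPf
      refine Finset.sum_congr rfl fun t _ => ?_
      rw [← Finset.mul_sum, ← CharTwo.sum_sq]
      ring
    rw [e1, Finset.sum_comm]
    unfold bPf
    rw [Finset.sum_mul_sum]
    refine Finset.sum_congr rfl fun a _ => ?_
    rw [← Equiv.sum_comp (auxShift a)
      (fun b => mono β a * u a * u a * (mono β b * w b * w b))]
    refine Finset.sum_congr rfl fun t _ => ?_
    have e2 : auxShift a (auxShift a t) = t := (auxShift a).left_inv t
    have e3 := aux_mono_mul β a (auxShift a t)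
    have e4 : (fun i => xor (a i) (auxShift a t i)) = t := e2
    rw [e4] at e3
    linear_combination (-(u a ^ 2) * w (auxShift a t) ^ 2) * e3
  have hz : p = z := aux_inj β h _ _ (hp.trans huv)
  rw [← hz]
  unfold bPf
  refine Finset.sum_congr rfl fun a _ => ?_
  have e5 : auxShift a (fun _ => false) = a := by funext i; simp [auxShift]
  rw [e5]
  simp only [Bool.and_self]
  ring

theorem aux_mono_cons {m : ℕ} (γ : F) (ψ : Fin m → F) (e : Fin (m + 1) → Bool) :
    mono (Fin.cons γ ψ : Fin (m + 1) → F) e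
      = (if e 0 then γ else 1) * mono ψ (fun j => e j.succ) := by
  unfold mono
  rw [Fin.prod_univ_succ]
  simp

/-- reindexing that makes the monomial `d` the first slot -/
def auxRe {m : ℕ} (d : Fin (m + 1) → Bool) (i : Fin (m + 1)) (hi : d i = true) :
    Equiv.Perm (Fin (m + 1) → Bool) where
  toFun e := fun k => xor (e 0 && d k)
    (i.insertNth (α := fun _ => Bool) false (fun j => e j.succ) k)
  invFun g := Fin.cons (g i) (fun j => xor (g i && d (i.succAbove j)) (g (i.succAbove j)))
  left_inv e := by
    funext k
    refine Fin.cases ?_ (fun j => ?_) k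
    · simp [hi]
    · simp [hi]
  right_inv g := by
    funext k
    refine Fin.succAboveCases i ?_ (fun j => ?_) k
    · simp [hi]
    · simp

theorem aux_slot {m : ℕ} (β : Fin (m + 1) → F) (hβ : ∀ i, β i ≠ 0)
    (d : Fin (m + 1) → Bool) (i : Fin (m + 1)) (hi : d i = true) :
    BilinIsom F (bPf F β)
      (bPf F (Fin.cons (mono β d) (fun j => β (i.succAbove j)) : Fin (m + 1) → F)) := by
  set σ := auxRe d i hi with hσ
  have hmono : ∀ e, ∃ c : F, c ≠ 0 ∧
      mono (Fin.cons (mono β d) (fun j => β (i.succAbove j)) : Fin (m + 1) → F) e * c ^ 2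
        = mono β (σ e) := by
    intro e
    set f : Fin (m + 1) → Bool :=
      i.insertNth (α := fun _ => Bool) false (fun j => e j.succ) with hf
    have h1 := aux_mono_mul β (fun k => e 0 && d k) f
    have h2 : mono β f = mono (fun j => β (i.succAbove j)) (fun j => e j.succ) := by
      unfold mono
      rw [Fin.prod_univ_succAbove _ i]
      simp [hf]
    have h3 : mono β (fun k => e 0 && d k) = if e 0 then mono β d else 1 := by
      cases e 0 <;> simp [aux_mono_false]
    have h4 : (fun k => xor (e 0 && d k) (f k)) = σ e := rfl
    have h5 := aux_mono_ne β hβ (fun k => (e 0 && d k) && f k)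
    refine ⟨(mono β (fun k => (e 0 && d k) && f k))⁻¹, inv_ne_zero h5, ?_⟩
    rw [aux_mono_cons, ← h2, ← h3, h1, h4]
    field_simp
  choose c hc hc2 using hmono
  refine ⟨(LinearEquiv.funCongrLeft F F σ).trans
    (LinearEquiv.piCongrRight fun e => LinearEquiv.smulOfNeZero F F (c e) (hc e)), ?_⟩
  intro v w
  unfold bPf
  rw [← Equiv.sum_comp σ (fun x => mono β x * v x * w x)]
  refine Finset.sum_congr rfl fun e _ => ?_
  rw [← hc2]
  change _ * (c e * v (σ e)) * (c e * w (σ e)) = _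
  ring

theorem aux_value [CharP F 2] {m : ℕ} (β : Fin (m + 1) → F)
    (h : BAniso F (bPf F β)) (γ : F) (ψ : Fin m → F)
    (hiso : BilinIsom F (bPf F β) (bPf F (Fin.cons γ ψ : Fin (m + 1) → F))) :
    ∃ u, bPf F β u u = γ ∧ u (fun _ => false) = 0 := by
  obtain ⟨e, he⟩ := hiso
  set C : Fin (m + 1) → F := Fin.cons γ ψ with hC
  let d1 : Fin (m + 1) → Bool := Fin.cons true (fun _ => false)
  have hd1 : (fun _ => false) ≠ d1 := fun h => by simpa [d1] using congrFun h 0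
  have hm : mono C d1 = γ := by
    rw [hC, aux_mono_cons]
    simp [d1, aux_mono_false]
  have hone : e.symm (Pi.single (fun _ => false) 1) = Pi.single (fun _ => false) 1 := by
    apply aux_inj β h
    rw [← he]
    simp only [LinearEquiv.apply_symm_apply, aux_single, aux_mono_false, Pi.single_eq_same]
  refine ⟨e.symm (Pi.single d1 1), ?_, ?_⟩
  · rw [← he]
    simp only [LinearEquiv.apply_symm_apply, aux_single, hm, Pi.single_eq_same, mul_one]
  · have h1 := aux_single β (e.symm (Pi.single d1 1)) (fun _ => false)
    rw [aux_mono_false, one_mul, ← hone, ← he] at h1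
    simp only [LinearEquiv.apply_symm_apply, aux_single] at h1
    rw [← h1, Pi.single_eq_of_ne hd1, mul_zero]

theorem aux_main [CharP F 2] {n : ℕ} (β₁ β₂ : Fin n → F)
    (h₁ : BAniso F (bPf F β₁)) (h₂ : BAniso F (bPf F β₂))
    (H : ∀ d : Fin n → Bool, d ≠ (fun _ => false) →
      ∃ u, bPf F β₂ u u = mono β₁ d ∧ u (fun _ => false) = 0) :
    BilinIsom F (bPf F β₁) (bPf F β₂) := by
  classical
  have H' : ∀ d : Fin n → Bool, ∃ u, bPf F β₂ u u = mono β₁ d ∧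
      (d ≠ (fun _ => false) → u (fun _ => false) = 0) := by
    intro d
    by_cases hd : d = fun _ => false
    · refine ⟨Pi.single (fun _ => false) 1, ?_, fun h => absurd hd h⟩
      rw [aux_single, hd, aux_mono_false, aux_mono_false]
      simp
    · obtain ⟨u, hu, hu0⟩ := H d hd
      exact ⟨u, hu, fun _ => hu0⟩
  choose u hu hu0 using H'
  have horth : ∀ a b, a ≠ b → bPf F β₂ (u a) (u b) = 0 := by
    intro a b hab
    rw [aux_key β₂ h₂ (u a) (u b)
      (mono β₁ (fun i => a i && b i) • u (fun i => xor (a i) (b i)))]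
    · rw [Pi.smul_apply, hu0, smul_zero]
      intro h
      apply hab
      funext i
      have := congrFun h i
      simpa using this
    · rw [aux_smul_left, aux_smul_right, hu, hu, hu, aux_mono_mul]
      ring
  let L : ((Fin n → Bool) → F) →ₗ[F] ((Fin n → Bool) → F) := Fintype.linearCombination F u
  have hL : ∀ v, L v = ∑ d, v d • u d := fun v => rfl
  have hiso : ∀ v w, bPf F β₂ (L v) (L w) = bPf F β₁ v w := by
    intro v w
    rw [hL, hL, aux_sum_left]
    conv_rhs => unfold bPf
    refine Finset.sum_congr rfl fun a _ => ?_
    rw [aux_sum_right, Finset.sum_eq_single a]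
    · rw [aux_smul_left, aux_smul_right, hu]; ring
    · intro b _ hb
      rw [aux_smul_left, aux_smul_right, horth a b hb.symm]; ring
    · simp
  have hinj : Function.Injective L := by
    intro v w hvw
    apply aux_inj β₁ h₁
    rw [← hiso, ← hiso, hvw]
  exact ⟨LinearEquiv.ofInjectiveEndo L hinj, fun v w => hiso v w⟩

end

/-- two anisotropic bilinear `n`-fold Pfister forms with the same
1-fold Pfister factors (slots) are isometric. -/
theorem stmt_7 (F : Type*) [Field F] [CharP F 2] (n : ℕ)
    (β₁ β₂ : Fin n → F) (hβ₁ : ∀ i, β₁ i ≠ 0) (hβ₂ : ∀ i, β₂ i ≠ 0)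
    (h₁ : BAniso F (bPf F β₁)) (h₂ : BAniso F (bPf F β₂))
    (hslots : ∀ γ : F, γ ≠ 0 →
      ((∃ ψ : Fin (n - 1) → F, (∀ i, ψ i ≠ 0) ∧
          BilinIsom F (bPf F β₁) (bPf F (Fin.cons γ ψ))) ↔
        (∃ ψ : Fin (n - 1) → F, (∀ i, ψ i ≠ 0) ∧
          BilinIsom F (bPf F β₂) (bPf F (Fin.cons γ ψ))))) :
    BilinIsom F (bPf F β₁) (bPf F β₂) := by
  cases n with
  | zero =>
    rw [Subsingleton.elim β₁ β₂]
    exact ⟨LinearEquiv.refl F _, fun v w => rfl⟩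
  | succ m =>
    refine aux_main β₁ β₂ h₁ h₂ fun d hd => ?_
    obtain ⟨i, hi⟩ := Function.ne_iff.mp hd
    have hi' : d i = true := by simpa using hi
    obtain ⟨ψ, _, hψ⟩ := (hslots (mono β₁ d) (aux_mono_ne β₁ hβ₁ d)).mp
      ⟨fun j => β₁ (i.succAbove j), fun j => hβ₁ _, aux_slot β₁ hβ₁ d i hi'⟩
    exact aux_value β₂ h₂ _ ψ hψ
end
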